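/- Let {x_i}_{i=1}^n ⊂ ℝ³ be points that are all coplanar, i.e., the centered vectors x_i − x_1 span a subspace of dimension strictly less than 3, and let {y_i}_{i=1}^n ⊂ ℝ³ satisfy ‖x_i − x_j‖ = ‖y_i − y_j‖ for all i, j. Then there exists a rotation matrix R ∈ SO(3) and t ∈ ℝ³ with y_i = R x_i + t for all i. -/

import Mathlib

open Matrix

/-- The matrix of a linear isometry of `ℝ³` is orthogonal. -/
lemma aux_orth (M : EuclideanSpace ℝ (Fin 3) →ₗᵢ[ℝ] EuclideanSpace ℝ (Fin 3))
    (R : Matrix (Fin 3) (Fin 3) ℝ) (hR : Matrix.toEuclideanLin R = M.toLinearMap) :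
    Rᵀ * R = 1 := by
  have hcol : ∀ i k, M (EuclideanSpace.single i 1) k = R k i := by
    intro i k
    have : M (EuclideanSpace.single i 1) = Matrix.toEuclideanLin R (EuclideanSpace.single i 1) := by
      rw [hR]; rfl
    rw [this]
    simp [Matrix.toLpLin_apply]
  ext i j
  have h := M.inner_map_map (EuclideanSpace.single i 1) (EuclideanSpace.single j 1)
  rw [PiLp.inner_apply] at h
  simp only [hcol] at h
  rw [Matrix.mul_apply, Matrix.one_apply]
  simp [Matrix.transpose_apply, mul_comm] at h ⊢
  rw [h]
  rw [EuclideanSpace.inner_single_left]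
  simp [Pi.single_apply]

lemma aux_det (R : Matrix (Fin 3) (Fin 3) ℝ) :
    LinearMap.det (Matrix.toEuclideanLin R) = R.det := by
  rw [Matrix.toEuclideanLin_eq_toLin, LinearMap.det_toLin]

/-- Equal Gram data gives a global linear isometry. -/
lemma aux_isom (n : ℕ) (u v : Fin (n + 1) → EuclideanSpace ℝ (Fin 3))
    (h : ∀ i j, inner ℝ (u i) (u j) = inner ℝ (v i) (v j)) :
    ∃ M : EuclideanSpace ℝ (Fin 3) →ₗᵢ[ℝ] EuclideanSpace ℝ (Fin 3), ∀ i, M (u i) = v i := by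
  let A := Fintype.linearCombination ℝ u
  let B := Fintype.linearCombination ℝ v
  have hAB : ∀ c, ‖A c‖ = ‖B c‖ := by
    intro c
    have : inner ℝ (A c) (A c) = inner ℝ (B c) (B c) := by
      simp only [A, B, Fintype.linearCombination_apply, sum_inner, inner_sum, inner_smul_left,
        inner_smul_right, h]
    rw [real_inner_self_eq_norm_sq, real_inner_self_eq_norm_sq] at this
    exact (sq_eq_sq₀ (norm_nonneg _) (norm_nonneg _)).1 this
  obtain ⟨g, hg⟩ := A.rangeRestrict.exists_rightInverse_of_surjective A.range_rangeRestrict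
  have hg' : ∀ s : LinearMap.range A, A (g s) = s := by
    intro s
    have := LinearMap.congr_fun hg s
    exact congrArg Subtype.val this
  let L : LinearMap.range A →ₗᵢ[ℝ] EuclideanSpace ℝ (Fin 3) :=
    { toLinearMap := B.comp g
      norm_map' := by
        intro s
        rw [LinearMap.comp_apply, ← hAB, hg']
        rfl }
  refine ⟨L.extend, fun i => ?_⟩
  have hu : A (Pi.single i 1) = u i := by simp [A]
  have hv : B (Pi.single i 1) = v i := by simp [B]
  have hmem : u i ∈ LinearMap.range A := ⟨_, hu⟩
  have h1 : L.extend (u i) = L ⟨u i, hmem⟩ := L.extend_apply ⟨u i, hmem⟩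
  have h2 : L ⟨u i, hmem⟩ = B (g ⟨u i, hmem⟩) := rfl
  rw [h1, h2, ← hv, ← sub_eq_zero, ← map_sub, ← norm_eq_zero, ← hAB, map_sub, hg', hu]
  simp

theorem coplanar_points_with_equal_distances_admit_rotation
    (n : ℕ) (x y : Fin (n + 1) → EuclideanSpace ℝ (Fin 3))
    (hcoplanar :
      Module.finrank ℝ (Submodule.span ℝ (Set.range fun i => x i - x 0)) < 3)
    (hdist : ∀ i j : Fin (n + 1), ‖x i - x j‖ = ‖y i - y j‖) :
    ∃ (R : Matrix (Fin 3) (Fin 3) ℝ) (t : EuclideanSpace ℝ (Fin 3)),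
      Rᵀ * R = 1 ∧ R.det = 1 ∧
        ∀ i : Fin (n + 1), y i = Matrix.toEuclideanLin R (x i) + t := by
  obtain ⟨M, hM⟩ := aux_isom n (fun i => x i - x 0) (fun i => y i - y 0) (by
    intro i j
    rw [real_inner_eq_norm_mul_self_add_norm_mul_self_sub_norm_sub_mul_self_div_two,
      real_inner_eq_norm_mul_self_add_norm_mul_self_sub_norm_sub_mul_self_div_two]
    simp only [sub_sub_sub_cancel_right, hdist])
  -- it suffices to find an isometry of determinant one
  suffices H : ∃ N : EuclideanSpace ℝ (Fin 3) →ₗᵢ[ℝ] EuclideanSpace ℝ (Fin 3),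
      LinearMap.det N.toLinearMap = 1 ∧ ∀ i, N (x i - x 0) = y i - y 0 by
    obtain ⟨N, hdet, hN⟩ := H
    have hR : Matrix.toEuclideanLin (Matrix.toEuclideanLin.symm N.toLinearMap) = N.toLinearMap :=
      LinearEquiv.apply_symm_apply _ _
    refine ⟨Matrix.toEuclideanLin.symm N.toLinearMap, y 0 - N (x 0), aux_orth N _ hR, ?_, ?_⟩
    · rw [← aux_det, hR, hdet]
    · intro i
      rw [hR]
      have := hN i
      rw [map_sub] at this
      change y i = N (x i) + (y 0 - N (x 0))
      rw [← sub_eq_zero] at this ⊢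
      rw [← neg_eq_zero, ← this]
      abel
  have hdet : LinearMap.det M.toLinearMap = 1 ∨ LinearMap.det M.toLinearMap = -1 := by
    have hR : Matrix.toEuclideanLin (Matrix.toEuclideanLin.symm M.toLinearMap) = M.toLinearMap :=
      LinearEquiv.apply_symm_apply _ _
    have ho := congrArg Matrix.det (aux_orth M _ hR)
    rw [Matrix.det_mul, Matrix.det_transpose, Matrix.det_one, ← aux_det, hR] at ho
    exact mul_self_eq_one_iff.1 ho
  rcases hdet with hd | hd
  · exact ⟨M, hd, hM⟩
  · set S := Submodule.span ℝ (Set.range fun i => x i - x 0) with hS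
    have hne : Sᗮ ≠ ⊥ := by
      intro hbot
      rw [Submodule.orthogonal_eq_bot_iff] at hbot
      rw [hbot, finrank_top] at hcoplanar
      simp at hcoplanar
    obtain ⟨w, hw, hw0⟩ := Submodule.exists_mem_ne_zero_of_ne_bot hne
    let ρ := (Submodule.span ℝ {w})ᗮ.reflection
    refine ⟨M.comp ρ.toLinearIsometry, ?_, fun i => ?_⟩
    · have : (M.comp ρ.toLinearIsometry).toLinearMap
          = M.toLinearMap.comp ρ.toLinearMap := rfl
      rw [this, LinearMap.det_comp, hd, Submodule.det_reflection, Submodule.orthogonal_orthogonal,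
        finrank_span_singleton hw0]
      norm_num
    · have hx : x i - x 0 ∈ S := Submodule.subset_span ⟨i, rfl⟩
      have : ρ (x i - x 0) = x i - x 0 := by
        apply Submodule.reflection_mem_subspace_eq_self
        rw [Submodule.mem_orthogonal_singleton_iff_inner_right]
        exact Submodule.inner_left_of_mem_orthogonal hx hw
      change M (ρ (x i - x 0)) = _
      rw [this, hM]
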